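/- Let n ≥ 2, let i ∈ {1,...,n−1}, and let integers k_1,...,k_i, k_{i+2},...,k_n satisfy k_1 < k_2 < ... < k_{i−1} < k_i − 1 and k_i < k_{i+2} < ... < k_n. For m = (m_1,...,m_n) ∈ ℤ^n, let N(m) denote the number of triangular integer arrays (a_{p,q})_{1 ≤ q ≤ p ≤ n} with a_{n,j} = m_j, with a_{p+1,q} ≤ a_{p,q} ≤ a_{p+1,q+1} for all 1 ≤ q ≤ p ≤ n−1, and with a_{p,q} < a_{p,q+1} for all 1 ≤ q < p ≤ n−1. Then N(k_1,...,k_{i−1}, k_i−1, k_i, k_{i+2},...,k_n) = N(k_1,...,k_{i−1}, k_i−1, k_i−1, k_{i+2},...,k_n) + N(k_1,...,k_{i−1}, k_i, k_i, k_{i+2},...,k_n). -/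

import Mathlib

/-- The Gelfand-Tsetlin condition: `a_{i+1,j} ≤ a_{i,j} ≤ a_{i+1,j+1}` for all entries
of the triangular array `(a_{i,j})_{1 ≤ j ≤ i ≤ n}`. -/
def IsGT {n : ℕ} (a : ∀ i : Fin n, Fin (i.1 + 1) → ℤ) : Prop :=
  ∀ i : Fin n, ∀ hi : i.1 + 1 < n, ∀ j : Fin (i.1 + 1),
    a ⟨i.1 + 1, hi⟩ ⟨j.1, by have := j.isLt; show j.1 < i.1 + 1 + 1; omega⟩ ≤ a i j ∧
      a i j ≤ a ⟨i.1 + 1, hi⟩ ⟨j.1 + 1, by have := j.isLt; show j.1 + 1 < i.1 + 1 + 1; omega⟩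

/-- Every row of the triangular array is strictly increasing. -/
def StrictRows {n : ℕ} (a : ∀ i : Fin n, Fin (i.1 + 1) → ℤ) : Prop :=
  ∀ i : Fin n, ∀ j : Fin (i.1 + 1), ∀ h : j.1 + 1 < i.1 + 1, a i j < a i ⟨j.1 + 1, h⟩

/-- Every row except possibly the bottom row is strictly increasing. -/
def StrictRowsAboveBottom {n : ℕ} (a : ∀ i : Fin n, Fin (i.1 + 1) → ℤ) : Prop :=
  ∀ i : Fin n, i.1 + 1 < n →
    ∀ j : Fin (i.1 + 1), ∀ h : j.1 + 1 < i.1 + 1, a i j < a i ⟨j.1 + 1, h⟩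

/-- The bottom row (row `n`) of a triangular array equals `k`. -/
def BottomRow {n : ℕ} (a : ∀ i : Fin n, Fin (i.1 + 1) → ℤ) (k : Fin n → ℤ) : Prop :=
  ∀ i : Fin n, i.1 + 1 = n → ∀ j : Fin (i.1 + 1),
    a i j = k ⟨j.1, by have := j.isLt; omega⟩

/-- `N m`: the number of triangular integer arrays with bottom row `m`, satisfying the
Gelfand-Tsetlin condition, all rows except possibly the bottom row strictly
increasing. -/
noncomputable def Ncount (n : ℕ) (m : Fin n → ℤ) : ℕ :=
  Nat.card {a : ∀ i : Fin n, Fin (i.1 + 1) → ℤ //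
    IsGT a ∧ StrictRowsAboveBottom a ∧ BottomRow a m}

/-!
Delete the bottom row: an array counted by `N(m)` is a monotone triangle whose last row `b` is
strictly increasing and interlaces `m`. Let `m` carry the values `x, y` in the positions
`t, t + 1`, where `x ≤ y` and no integer lies strictly between. Interlacing squeezes `b t` between
`x` and `y`, so `b t` is one of the two, and conversely, since `b` is strict, either value makes the
inequalities between `x`, `y` and the neighbours of `b t` automatic. Hence the pair `x, y` only
imposes `b t = x ∨ b t = y`. Reading this for `(x, y)`, `(x, x)` and `(y, y)` with `x < y` splits
the first set of triangles into the disjoint union of the other two.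
-/

/-- Triangular arrays with `n` rows, the `i`-th of which (counted from `0`) has `i + 1` entries. -/
abbrev TriangularArray (n : ℕ) : Type :=
  ∀ i : Fin n, Fin (i.1 + 1) → ℤ

/-- The interlacing relation between a row `b` of a Gelfand-Tsetlin pattern and the row `m`
below it. -/
def Interlaces {α : Type*} [LE α] {n : ℕ} (b : Fin n → α) (m : Fin (n + 1) → α) : Prop :=
  ∀ j : Fin n, m j.castSucc ≤ b j ∧ b j ≤ m j.succ

/-- The value `v` is admissible in position `p` of a row below `b`: it is squeezed between the
neighbours `b (p - 1)` and `b p`, of which one is missing when `p` is an end position. -/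
def InGap {α : Type*} [LE α] {n : ℕ} (b : Fin n → α) (p : Fin (n + 1)) (v : α) : Prop :=
  (∀ j : Fin n, j.castSucc = p → v ≤ b j) ∧ ∀ j : Fin n, j.succ = p → b j ≤ v

/-- The monotone triangles whose bottom row interlaces `m`, that is, what remains of the arrays
counted by `Ncount (n + 2) m` when the bottom row `m` is deleted. -/
def monotoneTrianglesAbove {n : ℕ} (m : Fin (n + 2) → ℤ) : Set (TriangularArray (n + 1)) :=
  {a | IsGT a ∧ StrictRows a ∧ Interlaces (a (Fin.last n)) m}

section Interlacing

open Function

theorem update_succ_update_castSucc_eq_ite {α : Type*} {n : ℕ} (m : Fin (n + 1) → α) (t : Fin n)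
    (x y : α) :
    update (update m t.succ y) t.castSucc x =
      fun j => if j.1 = t.1 then x else if j.1 = t.1 + 1 then y else m j := by
  ext j
  simp only [update_apply, Fin.ext_iff, Fin.val_castSucc, Fin.val_succ]

theorem interlaces_iff_forall_inGap {α : Type*} [LE α] {n : ℕ} {b : Fin n → α}
    {m : Fin (n + 1) → α} : Interlaces b m ↔ ∀ p, InGap b p (m p) := by
  constructor
  · refine fun h p => ⟨?_, ?_⟩
    · rintro j rfl
      exact (h j).1
    · rintro j rfl
      exact (h j).2
  · exact fun h j => ⟨(h j.castSucc).1 j rfl, (h j.succ).2 j rfl⟩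

theorem interlaces_update_succ_update_castSucc_iff {α : Type*} [LE α] {n : ℕ} {b : Fin n → α}
    {m : Fin (n + 1) → α} {t : Fin n} {x y : α} :
    Interlaces b (update (update m t.succ y) t.castSucc x) ↔
      (InGap b t.castSucc x ∧ InGap b t.succ y) ∧
        ∀ p, p ≠ t.succ → p ≠ t.castSucc → InGap b p (m p) := by
  rw [interlaces_iff_forall_inGap, forall_update_iff _ (fun p v => InGap b p v),
    forall_update_iff m (fun p v => p ≠ t.castSucc → InGap b p v), and_assoc]
  simp only [ne_eq, t.castSucc_lt_succ.ne', not_false_eq_true, forall_const]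

variable {α : Type*} [LinearOrder α] {n : ℕ} {b : Fin n → α} {t : Fin n} {x y : α}

theorem inGap_castSucc_and_inGap_succ_iff (hb : StrictMono b) (hxy : x ⩿ y) :
    InGap b t.castSucc x ∧ InGap b t.succ y ↔ b t = x ∨ b t = y := by
  have lt_of_succ_eq {j : Fin n} (h : j.succ = t.castSucc) : b j < b t :=
    hb (Fin.succ_le_castSucc_iff.mp h.le)
  have lt_of_castSucc_eq {j : Fin n} (h : j.castSucc = t.succ) : b t < b j :=
    hb (Fin.succ_le_castSucc_iff.mp h.ge)
  constructor
  · exact fun ⟨hx, hy⟩ => hxy.eq_or_eq (hx.1 t rfl) (hy.2 t rfl)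
  · rintro (rfl | rfl)
    · refine ⟨⟨fun j hj => ?_, fun j hj => (lt_of_succ_eq hj).le⟩,
        ⟨fun j hj => hxy.ge_of_gt (lt_of_castSucc_eq hj), fun j hj => ?_⟩⟩
      · rw [Fin.castSucc_injective n hj]
      · rw [Fin.succ_injective n hj]
        exact hxy.le
    · refine ⟨⟨fun j hj => ?_, fun j hj => hxy.le_of_lt (lt_of_succ_eq hj)⟩,
        ⟨fun j hj => (lt_of_castSucc_eq hj).le, fun j hj => ?_⟩⟩
      · rw [Fin.castSucc_injective n hj]
        exact hxy.le
      · rw [Fin.succ_injective n hj]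

end Interlacing

section Truncation

variable {n : ℕ}

theorem isGT_iff_init {a : TriangularArray (n + 2)} :
    IsGT a ↔ IsGT (Fin.init a) ∧ Interlaces (a (Fin.last n).castSucc) (a (Fin.last (n + 1))) := by
  constructor
  · exact fun h => ⟨fun i hi j => h i.castSucc (Nat.lt_succ_of_lt hi) j,
      fun j => h (Fin.last n).castSucc (Nat.lt_succ_self _) j⟩
  · rintro ⟨htop, hlast⟩ ⟨i, _⟩ (hi : i + 1 < n + 2) j
    obtain hlt | rfl : i < n ∨ i = n := by omega
    · exact htop ⟨i, Nat.lt_succ_of_lt hlt⟩ (Nat.succ_lt_succ hlt) j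
    · exact hlast j

theorem strictRowsAboveBottom_iff_init {a : TriangularArray (n + 1)} :
    StrictRowsAboveBottom a ↔ StrictRows (Fin.init a) :=
  ⟨fun h i => h i.castSucc (Nat.succ_lt_succ i.isLt),
    fun h i hi => h ⟨i, Nat.lt_of_succ_lt_succ hi⟩⟩

theorem bottomRow_iff {a : TriangularArray (n + 1)} {m : Fin (n + 1) → ℤ} :
    BottomRow a m ↔ a (Fin.last n) = m := by
  constructor
  · exact fun h => funext (h (Fin.last n) rfl)
  · rintro rfl ⟨i, hi⟩ h j
    obtain rfl : i = n := Nat.succ_injective h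
    rfl

theorem ncount_eq_ncard_monotoneTrianglesAbove (m : Fin (n + 2) → ℤ) :
    Ncount (n + 2) m = (monotoneTrianglesAbove m).ncard := by
  refine Nat.card_congr
    { toFun a := ⟨Fin.init a.1, ?_⟩
      invFun a := ⟨Fin.snoc (α := fun i : Fin (n + 2) => Fin (i.1 + 1) → ℤ) a.1 m, ?_⟩
      left_inv a := Subtype.ext ?_
      right_inv a := Subtype.ext ?_ }
  · obtain ⟨a, hGT, hstrict, hm⟩ := a
    obtain ⟨htop, hlast⟩ := isGT_iff_init.mp hGT
    rw [bottomRow_iff.mp hm] at hlast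
    exact ⟨htop, strictRowsAboveBottom_iff_init.mp hstrict, hlast⟩
  · obtain ⟨a, hGT, hstrict, hm⟩ := a
    rw [isGT_iff_init, strictRowsAboveBottom_iff_init, bottomRow_iff, Fin.init_snoc,
      Fin.snoc_castSucc, Fin.snoc_last]
    exact ⟨⟨hGT, hm⟩, hstrict, rfl⟩
  · obtain ⟨a, -, -, hm⟩ := a
    obtain rfl := bottomRow_iff.mp hm
    exact Fin.snoc_init_self a
  · exact Fin.init_snoc (α := fun i : Fin (n + 2) => Fin (i.1 + 1) → ℤ) m a.1

theorem StrictRows.strictMono_last {a : TriangularArray (n + 1)} (ha : StrictRows a) :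
    StrictMono (a (Fin.last n)) :=
  Fin.strictMono_iff_lt_succ.mpr fun j =>
    ha (Fin.last n) j.castSucc (Nat.succ_lt_succ j.isLt)

theorem IsGT.mem_Icc {a : TriangularArray (n + 1)} (ha : IsGT a) {L U : ℤ}
    (hlast : ∀ j, a (Fin.last n) j ∈ Set.Icc L U) (i : Fin (n + 1)) :
    ∀ j, a i j ∈ Set.Icc L U := by
  induction i using Fin.reverseInduction with
  | last => exact hlast
  | cast i ih =>
    intro j
    have hj := ha i.castSucc (Nat.succ_lt_succ i.isLt) j
    exact ⟨(ih _).1.trans hj.1, hj.2.trans (ih _).2⟩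

theorem finite_monotoneTrianglesAbove (m : Fin (n + 2) → ℤ) :
    (monotoneTrianglesAbove m).Finite := by
  obtain ⟨L, hL⟩ := (Set.finite_range m).bddBelow
  obtain ⟨U, hU⟩ := (Set.finite_range m).bddAbove
  refine (Set.finite_Icc (fun _ _ => L : TriangularArray (n + 1)) (fun _ _ => U)).subset ?_
  rintro a ⟨hGT, -, hm⟩
  have hmem := hGT.mem_Icc fun j =>
    ⟨(hL ⟨_, rfl⟩).trans (hm j).1, (hm j).2.trans (hU ⟨_, rfl⟩)⟩
  exact ⟨fun i j => (hmem i j).1, fun i j => (hmem i j).2⟩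

end Truncation

section Splitting

open Function

variable {n : ℕ} (k : Fin (n + 2) → ℤ) (t : Fin (n + 1)) {x y : ℤ}

theorem mem_monotoneTrianglesAbove_update_iff {a : TriangularArray (n + 1)} (hxy : x ⩿ y) :
    a ∈ monotoneTrianglesAbove (update (update k t.succ y) t.castSucc x) ↔
      (a (Fin.last n) t = x ∨ a (Fin.last n) t = y) ∧ IsGT a ∧ StrictRows a ∧
        ∀ p, p ≠ t.succ → p ≠ t.castSucc → InGap (a (Fin.last n)) p (k p) := by
  have hrow (ha : StrictRows a) :=
    inGap_castSucc_and_inGap_succ_iff (t := t) ha.strictMono_last hxy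
  simp only [monotoneTrianglesAbove, Set.mem_ofPred_eq, interlaces_update_succ_update_castSucc_iff]
  constructor
  · rintro ⟨hGT, hstrict, hgap, hrest⟩
    exact ⟨(hrow hstrict).mp hgap, hGT, hstrict, hrest⟩
  · rintro ⟨hval, hGT, hstrict, hrest⟩
    exact ⟨hGT, hstrict, (hrow hstrict).mpr hval, hrest⟩

theorem monotone_triangle_splitting_general (hxy : x ⋖ y) :
    Ncount (n + 2) (update (update k t.succ y) t.castSucc x) =
      Ncount (n + 2) (update (update k t.succ x) t.castSucc x) +
        Ncount (n + 2) (update (update k t.succ y) t.castSucc y) := by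
  simp only [ncount_eq_ncard_monotoneTrianglesAbove]
  rw [← Set.ncard_union_eq _ (finite_monotoneTrianglesAbove _) (finite_monotoneTrianglesAbove _)]
  · congr 1
    ext a
    simp only [Set.mem_union, mem_monotoneTrianglesAbove_update_iff k t hxy.wcovBy,
      mem_monotoneTrianglesAbove_update_iff k t (WCovBy.refl _), or_self, or_and_right]
  · rw [Set.disjoint_left]
    intro a hax hay
    rw [mem_monotoneTrianglesAbove_update_iff k t (WCovBy.refl _), or_self] at hax hay
    exact hxy.ne (hax.1.symm.trans hay.1)

end Splitting

/-- With `k_1 < k_2 < … < k_{i-1} < k_i - 1` and `k_i < k_{i+2} < … < k_n`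
(1-based indexing; `k ⟨t⟩` is the paper's `k_{t+1}`, and the paper's `k_{i+1}` is
irrelevant), one has
`N(k_1,…,k_{i-1},k_i-1,k_i,k_{i+2},…,k_n)
  = N(k_1,…,k_{i-1},k_i-1,k_i-1,k_{i+2},…,k_n)
    + N(k_1,…,k_{i-1},k_i,k_i,k_{i+2},…,k_n)`. -/
theorem monotone_triangle_splitting (n : ℕ) (hn : 2 ≤ n) (i : ℕ)
    (hi1 : 1 ≤ i) (hi2 : i ≤ n - 1) (k : Fin n → ℤ)
    (h1 : ∀ a b : Fin n, a.1 + 1 = b.1 → b.1 + 2 ≤ i → k a < k b)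
    (h2 : ∀ a : Fin n, a.1 + 2 = i → k a < k ⟨i - 1, by omega⟩ - 1)
    (h3 : ∀ b : Fin n, b.1 = i + 1 → k ⟨i - 1, by omega⟩ < k b)
    (h4 : ∀ a b : Fin n, i + 1 ≤ a.1 → a.1 + 1 = b.1 → k a < k b) :
    Ncount n (fun j =>
        if j.1 = i - 1 then k ⟨i - 1, by omega⟩ - 1
        else if j.1 = i then k ⟨i - 1, by omega⟩
        else k j) =
      Ncount n (fun j =>
        if j.1 = i - 1 ∨ j.1 = i then k ⟨i - 1, by omega⟩ - 1 else k j) +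
      Ncount n (fun j =>
        if j.1 = i - 1 ∨ j.1 = i then k ⟨i - 1, by omega⟩ else k j) := by
  obtain ⟨n, rfl⟩ := Nat.exists_eq_add_of_le' hn
  obtain ⟨t, rfl⟩ := Nat.exists_eq_add_of_le' hi1
  simpa only [update_succ_update_castSucc_eq_ite, ite_or, Nat.add_sub_cancel] using
    monotone_triangle_splitting_general k ⟨t, by omega⟩ (Order.sub_one_covBy (k ⟨t, by omega⟩))
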